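/- Let p ≥ 1 and q ≥ 1 be integers. The extended Lorentz cone M(p,q) = {(x,u) ∈ ℝ^p × ℝ^q : ⟨x, e⟩ ≥ ‖u‖, x ≥ 0} is a proper cone in ℝ^{p+q}: it is closed, convex, satisfies λ v ∈ M(p,q) for all λ ≥ 0 and v ∈ M(p,q), satisfies M(p,q) ∩ (−M(p,q)) = {0}, and has nonempty interior. -/

import Mathlib

open Matrix Finset

/-- The extended Lorentz cone `L(p,q) = {(x,u) : x ≥ ‖u‖e componentwise}`. -/
noncomputable def Lcone (p q : ℕ) : Set (Fin (p + q) → ℝ) :=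
  {z | ∀ i : Fin p,
    Real.sqrt (∑ j : Fin q, (z (Fin.natAdd p j)) ^ 2) ≤ z (Fin.castAdd q i)}

/-- The extended Lorentz cone `M(p,q) = {(x,u) : ⟨x,e⟩ ≥ ‖u‖, x ≥ 0}`. -/
noncomputable def Mcone (p q : ℕ) : Set (Fin (p + q) → ℝ) :=
  {z | Real.sqrt (∑ j : Fin q, (z (Fin.natAdd p j)) ^ 2) ≤ ∑ i : Fin p, z (Fin.castAdd q i) ∧
    ∀ i : Fin p, 0 ≤ z (Fin.castAdd q i)}

/-!
`Mcone p q` is the Lorentz cone `{(x, u) | x ∈ C, ‖u‖ ≤ f x}` over the nonnegative orthant `C`,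
where `f x = ∑ i, x i`. Such a set is a closed convex cone because it is cut out by the sublinear
inequality `‖u‖ ≤ f x`. If both `(x, u)` and `-(x, u)` lie in it, then `x = 0` because `C` is
salient, hence `‖u‖ ≤ f 0 = 0`. A point with `x` interior to `C` and `‖u‖ < f x` is an interior
point, and `(e, 0)` is such a point when `0 < p`.
-/

section LorentzCone

open Topology

variable {E F : Type*} [AddCommGroup E] [Module ℝ E] [TopologicalSpace E]

/-- The Lorentz cone `{(x, u) | x ∈ C, ‖u‖ ≤ f x}` over a closed convex cone `C`, with the height of
`x` measured by a continuous linear functional `f`. It generalises the extended Lorentz cone, for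
which `C` is the nonnegative orthant and `f` the sum of the coordinates. -/
def lorentzCone [SeminormedAddCommGroup F] [NormedSpace ℝ F] (C : ProperCone ℝ E)
    (f : StrongDual ℝ E) : ProperCone ℝ (E × F) where
  carrier := {v | v.1 ∈ C ∧ ‖v.2‖ ≤ f v.1}
  zero_mem' := ⟨C.zero_mem, by simp⟩
  add_mem' := by
    rintro ⟨x, u⟩ ⟨y, w⟩ ⟨hx, hu⟩ ⟨hy, hw⟩
    refine ⟨C.add_mem hx hy, ?_⟩
    calc ‖u + w‖ ≤ ‖u‖ + ‖w‖ := norm_add_le u w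
      _ ≤ f x + f y := add_le_add hu hw
      _ = f (x + y) := (map_add f x y).symm
  smul_mem' := by
    rintro ⟨r, hr⟩ ⟨x, u⟩ ⟨hx, hu⟩
    refine ⟨C.smul_mem hx hr, ?_⟩
    calc ‖r • u‖ = r * ‖u‖ := norm_smul_of_nonneg hr u
      _ ≤ r * f x := mul_le_mul_of_nonneg_left hu hr
      _ = f (r • x) := (map_smul f r x).symm
  isClosed' := (C.isClosed.preimage continuous_fst).inter
    (isClosed_le continuous_snd.norm (f.continuous.comp continuous_fst))

theorem mem_lorentzCone [SeminormedAddCommGroup F] [NormedSpace ℝ F] {C : ProperCone ℝ E}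
    {f : StrongDual ℝ E} {v : E × F} : v ∈ lorentzCone C f ↔ v.1 ∈ C ∧ ‖v.2‖ ≤ f v.1 :=
  Iff.rfl

theorem salient_lorentzCone [NormedAddCommGroup F] [NormedSpace ℝ F] {C : ProperCone ℝ E}
    (hC : (C : ConvexCone ℝ E).Salient) (f : StrongDual ℝ E) :
    (lorentzCone (F := F) C f : ConvexCone ℝ (E × F)).Salient := by
  rintro ⟨x, u⟩ ⟨hx, hu⟩ hne ⟨hx', -⟩
  have hx0 : x = 0 := by
    by_contra hx_ne
    exact hC x hx hx_ne hx'
  have hu0 : u = 0 := norm_le_zero_iff.mp (by simpa [hx0] using hu)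
  exact hne (Prod.ext hx0 hu0)

theorem mem_interior_lorentzCone [SeminormedAddCommGroup F] [NormedSpace ℝ F] {C : ProperCone ℝ E}
    {f : StrongDual ℝ E} {v : E × F} (hC : v.1 ∈ interior (C : Set E)) (hf : ‖v.2‖ < f v.1) :
    v ∈ interior (lorentzCone (F := F) C f : Set (E × F)) := by
  rw [mem_interior_iff_mem_nhds]
  have h_base : ∀ᶠ w : E × F in 𝓝 v, w.1 ∈ C :=
    continuous_fst.continuousAt.eventually (mem_interior_iff_mem_nhds.mp hC)
  have h_height : ∀ᶠ w : E × F in 𝓝 v, ‖w.2‖ < f w.1 :=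
    continuous_snd.norm.continuousAt.eventually_lt
      (f.continuous.comp continuous_fst).continuousAt hf
  filter_upwards [h_base, h_height] with w hw_base hw_height
  exact ⟨hw_base, hw_height.le⟩

end LorentzCone

theorem salient_comap_of_injective {R E F : Type*} [Semiring R] [PartialOrder R] [IsOrderedRing R]
    [AddCommGroup E] [Module R E] [AddCommGroup F] [Module R F] {C : PointedCone R F}
    (hC : (C : ConvexCone R F).Salient) {f : E →ₗ[R] F} (hf : Function.Injective f) :
    (C.comap f : ConvexCone R E).Salient := fun x hx hne hx' =>
  hC (f x) hx ((map_ne_zero_iff f hf).mpr hne) (by simpa using hx')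

theorem mem_interior_positive_pi {ι : Type*} [Finite ι] {x : ι → ℝ} (hx : ∀ i, 0 < x i) :
    x ∈ interior (ProperCone.positive ℝ (ι → ℝ) : Set (ι → ℝ)) :=
  mem_interior_iff_mem_nhds.mpr (pi_Ici_mem_nhds hx)

section ExtendedLorentzCone

variable (p q : ℕ)

/-- The identification of `ℝ^(p+q)` with `ℝ^p × ℝ^q`, sending `z` to `(x, u)`. The second factor is
a `EuclideanSpace`, so that its norm is the Euclidean norm in the definition of `Mcone`. -/
noncomputable def splitCoords : (Fin (p + q) → ℝ) →L[ℝ] (Fin p → ℝ) × EuclideanSpace ℝ (Fin q) :=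
  (ContinuousLinearMap.pi fun i => .proj (Fin.castAdd q i)).prod
    ((EuclideanSpace.equiv (Fin q) ℝ).symm.toContinuousLinearMap ∘L
      .pi fun j => .proj (Fin.natAdd p j))

/-- The functional `x ↦ ⟨x, e⟩` on `ℝ^p`, the height in the extended Lorentz cone. -/
noncomputable def coordSum : StrongDual ℝ (Fin p → ℝ) :=
  ∑ i, .proj i

/-- The cone `M(p,q)` as a closed convex cone, that is, as a `ProperCone` in the sense of Mathlib
(which requires neither salience nor nonempty interior). -/
noncomputable def extendedLorentzCone : ProperCone ℝ (Fin (p + q) → ℝ) :=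
  (lorentzCone (.positive ℝ (Fin p → ℝ)) (coordSum p)).comap (splitCoords p q)

variable {p q}

theorem splitCoords_apply (z : Fin (p + q) → ℝ) :
    splitCoords p q z =
      (fun i => z (Fin.castAdd q i), WithLp.toLp 2 fun j => z (Fin.natAdd p j)) :=
  rfl

theorem splitCoords_append (x : Fin p → ℝ) (u : Fin q → ℝ) :
    splitCoords p q (Fin.append x u) = (x, WithLp.toLp 2 u) := by
  simp [splitCoords_apply]

theorem splitCoords_injective : Function.Injective (splitCoords p q) := by
  intro z w h
  simp only [splitCoords_apply, Prod.mk.injEq, WithLp.toLp.injEq] at h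
  exact funext (Fin.addCases (congrFun h.1) (congrFun h.2))

theorem coordSum_apply (x : Fin p → ℝ) : coordSum p x = ∑ i, x i := by
  simp [coordSum]

theorem coe_extendedLorentzCone :
    (extendedLorentzCone p q : Set (Fin (p + q) → ℝ)) = Mcone p q := by
  ext z
  simp [extendedLorentzCone, Mcone, mem_lorentzCone, splitCoords_apply, coordSum_apply,
    EuclideanSpace.norm_eq, Pi.le_def, and_comm]

theorem salient_extendedLorentzCone :
    (extendedLorentzCone p q : ConvexCone ℝ (Fin (p + q) → ℝ)).Salient :=
  salient_comap_of_injective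
    (salient_lorentzCone (C := .positive ℝ (Fin p → ℝ)) ConvexCone.salient_positive (coordSum p))
    (f := (splitCoords p q).toLinearMap) splitCoords_injective

theorem interior_extendedLorentzCone_nonempty (hp : 0 < p) :
    (interior (extendedLorentzCone p q : Set (Fin (p + q) → ℝ))).Nonempty := by
  rw [extendedLorentzCone, ProperCone.coe_comap]
  refine ⟨Fin.append 1 0,
    preimage_interior_subset_interior_preimage (splitCoords p q).continuous ?_⟩
  rw [Set.mem_preimage, splitCoords_append]
  refine mem_interior_lorentzCone (mem_interior_positive_pi fun _ => one_pos) ?_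
  simpa [coordSum_apply] using hp

end ExtendedLorentzCone

theorem stmt10 (p q : ℕ) (hp : 1 ≤ p) (hq : 1 ≤ q) :
    IsClosed (Mcone p q) ∧ Convex ℝ (Mcone p q) ∧
      (∀ lam : ℝ, 0 ≤ lam → ∀ v ∈ Mcone p q, lam • v ∈ Mcone p q) ∧
      Mcone p q ∩ (-Mcone p q) = {0} ∧
      (interior (Mcone p q)).Nonempty := by
  rw [← coe_extendedLorentzCone]
  exact ⟨(extendedLorentzCone p q).isClosed, (extendedLorentzCone p q).convex,
    fun _ hlam _ hv => (extendedLorentzCone p q).smul_mem hv hlam,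
    (PointedCone.salient_iff_inter_neg_eq_singleton _).mp salient_extendedLorentzCone,
    interior_extendedLorentzCone_nonempty hp⟩
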